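/- Let F : ℝ^N → ℝ^N, λ > 0, η > 0, μ > 0, L > 0, and x, x*, z ∈ ℝ^N. Assume: (i) z satisfies ⟨z − (x − ηF(x)), q − z⟩ ≥ η(λ‖z‖₁ − λ‖q‖₁) for all q ∈ ℝ^N; (ii) x* satisfies ⟨F(x*), q − x*⟩ + λ‖q‖₁ − λ‖x*‖₁ ≥ 0 for all q ∈ ℝ^N; (iii) ⟨F(u) − F(w), u − w⟩ ≥ μ‖u − w‖₂² for all u, w ∈ ℝ^N; (iv) ‖F(u) − F(w)‖₂ ≤ L‖u − w‖₂ for all u, w ∈ ℝ^N. Then ⟨x − z, x* − z⟩ ≤ −ημ‖x* − z‖₂² + (1/2)‖x − z‖₂² + (η²L²/2)‖x* − z‖₂². -/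

import Mathlib

open scoped RealInnerProductSpace

/-!
A proximal point is itself the solution of a mixed variational inequality, so `z` and `xs` solve
two such inequalities with the same nonsmooth term `η • g`. Testing each with the other cancels
`g` and leaves `⟪x - z, xs - z⟫ ≤ η * ⟪F x - F xs, xs - z⟫`. Inserting `F z` splits the right-hand
side into a part controlled by strong monotonicity and a part controlled by the Lipschitz bound and
Young's inequality.
-/

section MixedVariationalInequality

variable {E : Type*} [SeminormedAddCommGroup E] [InnerProductSpace ℝ E]

/-- `x` solves the mixed variational inequality with operator `F` and nonsmooth term `g`. For convex
`g` this is the inclusion `0 ∈ F x + ∂g x`. -/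
def IsMixedVISolution (F : E → E) (g : E → ℝ) (x : E) : Prop :=
  ∀ q, 0 ≤ ⟪F x, q - x⟫ + g q - g x

/-- `z` is a proximal point of `g` at `p`, i.e. `p - z` is a subgradient of `g` at `z`. It is
encoded by its variational inequality rather than as a minimizer of `g q + ‖q - p‖ ^ 2 / 2`; the two
conditions agree for convex `g`. -/
def IsProxPoint (g : E → ℝ) (p z : E) : Prop :=
  IsMixedVISolution (fun y ↦ y - p) g z

theorem IsMixedVISolution.smul {F : E → E} {g : E → ℝ} {x : E} (hx : IsMixedVISolution F g x)
    {c : ℝ} (hc : 0 ≤ c) : IsMixedVISolution (c • F) (c • g) x := by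
  intro q
  have hscaled := mul_nonneg hc (hx q)
  simp only [Pi.smul_apply, smul_eq_mul, real_inner_smul_left]
  linarith

theorem IsMixedVISolution.inner_sub_sub_nonpos {G H : E → E} {g : E → ℝ} {x y : E}
    (hx : IsMixedVISolution G g x) (hy : IsMixedVISolution H g y) :
    ⟪G x - H y, x - y⟫ ≤ 0 := by
  have hxy := hx y
  have hyx := hy x
  rw [← neg_sub x y, inner_neg_right] at hxy
  rw [inner_sub_left]
  linarith

theorem IsProxPoint.inner_sub_sub_le {F : E → E} {g : E → ℝ} {η : ℝ} {x xs z : E} (hη : 0 ≤ η)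
    (hz : IsProxPoint (η • g) (x - η • F x) z) (hxs : IsMixedVISolution F g xs) :
    ⟪x - z, xs - z⟫ ≤ η * ⟪F x - F xs, xs - z⟫ := by
  have hsplit : z - (x - η • F x) - η • F xs = η • (F x - F xs) - (x - z) := by module
  have hcross : ⟪z - (x - η • F x) - η • F xs, z - xs⟫ ≤ 0 :=
    IsMixedVISolution.inner_sub_sub_nonpos hz (hxs.smul hη)
  rw [hsplit, ← neg_sub xs z, inner_neg_right, inner_sub_left, real_inner_smul_left] at hcross
  linarith

theorem mul_inner_le_of_norm_le {η L r : ℝ} {u : E} (hη : 0 ≤ η) (hu : ‖u‖ ≤ L * r) (v : E) :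
    η * ⟪u, v⟫ ≤ (1 / 2) * r ^ 2 + (η ^ 2 * L ^ 2 / 2) * ‖v‖ ^ 2 :=
  calc
    η * ⟪u, v⟫ ≤ η * (‖u‖ * ‖v‖) := by gcongr; exact real_inner_le_norm u v
    _ ≤ η * (L * r * ‖v‖) := by gcongr
    _ = r * (η * L * ‖v‖) := by ring
    _ ≤ (1 / 2) * r ^ 2 + (η ^ 2 * L ^ 2 / 2) * ‖v‖ ^ 2 := by
      linarith [two_mul_le_add_sq r (η * L * ‖v‖)]

theorem stmt_10_general {F : E → E} {g : E → ℝ} {η μ L : ℝ} {x xs z : E} (hη : 0 ≤ η)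
    (hz : IsProxPoint (η • g) (x - η • F x) z) (hxs : IsMixedVISolution F g xs)
    (hmono : μ * ‖xs - z‖ ^ 2 ≤ ⟪F xs - F z, xs - z⟫)
    (hlip : ‖F x - F z‖ ≤ L * ‖x - z‖) :
    ⟪x - z, xs - z⟫ ≤
      -(η * μ) * ‖xs - z‖ ^ 2 + (1 / 2) * ‖x - z‖ ^ 2 + (η ^ 2 * L ^ 2 / 2) * ‖xs - z‖ ^ 2 :=
  calc
    ⟪x - z, xs - z⟫ ≤ η * ⟪F x - F xs, xs - z⟫ := hz.inner_sub_sub_le hη hxs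
    _ = -(η * ⟪F xs - F z, xs - z⟫) + η * ⟪F x - F z, xs - z⟫ := by
      rw [← sub_sub_sub_cancel_right (F x) (F xs) (F z), inner_sub_left]
      ring
    _ ≤ -(η * (μ * ‖xs - z‖ ^ 2)) +
        ((1 / 2) * ‖x - z‖ ^ 2 + (η ^ 2 * L ^ 2 / 2) * ‖xs - z‖ ^ 2) := by
      gcongr
      exact mul_inner_le_of_norm_le hη hlip (xs - z)
    _ = _ := by ring

end MixedVariationalInequality

/-- Refined inequality: under the proximal variational inequality for `z`, the
optimality condition for `x*`, strong monotonicity and Lipschitz continuity of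
`F`, one has `⟨x − z, x* − z⟩ ≤ −ημ‖x* − z‖² + (1/2)‖x − z‖² + (η²L²/2)‖x* − z‖²`. -/
theorem stmt_10 (N : ℕ) (F : EuclideanSpace ℝ (Fin N) → EuclideanSpace ℝ (Fin N))
    (lam η μ L : ℝ) (hlam : 0 < lam) (hη : 0 < η) (hμ : 0 < μ) (hL : 0 < L)
    (x xs z : EuclideanSpace ℝ (Fin N))
    (hz : ∀ q : EuclideanSpace ℝ (Fin N),
      ⟪z - (x - η • F x), q - z⟫ ≥ η * (lam * ∑ i, |z i| - lam * ∑ i, |q i|))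
    (hxs : ∀ q : EuclideanSpace ℝ (Fin N),
      ⟪F xs, q - xs⟫ + lam * ∑ i, |q i| - lam * ∑ i, |xs i| ≥ 0)
    (hmono : ∀ u w : EuclideanSpace ℝ (Fin N), ⟪F u - F w, u - w⟫ ≥ μ * ‖u - w‖ ^ 2)
    (hlip : ∀ u w : EuclideanSpace ℝ (Fin N), ‖F u - F w‖ ≤ L * ‖u - w‖) :
    ⟪x - z, xs - z⟫ ≤
      -(η * μ) * ‖xs - z‖ ^ 2 + (1 / 2 : ℝ) * ‖x - z‖ ^ 2
        + (η ^ 2 * L ^ 2 / 2) * ‖xs - z‖ ^ 2 := by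
  have hprox : IsProxPoint (η • fun u ↦ lam * ∑ i, |u i|) (x - η • F x) z := fun q ↦ by
    simp only [Pi.smul_apply, smul_eq_mul]
    linarith [hz q]
  exact stmt_10_general hη.le hprox hxs (hmono xs z) (hlip x z)
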